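/- Let σ > 0. There exists R₀ = R₀(m,n,σ) ≥ 1 such that for every R ≥ R₀ the following holds, with δ = R^{-m(m+n)²}, δ* = R^{-n(m+n)²}, τ = m/(m+n). Let i ∈ ℕ and let B ⊆ ℒ^{mn} be a ball of radius less than R^{-(m+n)(1+i)} with ‖A‖_∞ ≤ σ for all A ∈ B. Suppose there is no q ∈ 𝔽[X]^{m+n} and no A ∈ B satisfying both 0 < max_{1≤l'≤n} ‖q_{l'}‖ < δ* R^{m(1+i)} and max_{1≤l≤m} ‖q·C_l(Ā^*)‖ < δ* R^{-n(1+i)-m}. Then the set of q ∈ 𝔽[X]^{m+n} such that for some A ∈ B both 0 < max_{1≤l≤m} ‖q_l‖ < δ R^{n(τ+i+1)} and max_{1≤l'≤n} ‖q·C_{l'}(Ā)‖ < δ R^{-m(τ+i+1)-n} hold contains at most n linearly independent points. -/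

import Mathlib

/-!
Common setup: the field `ℒ = 𝔽((X⁻¹))` of formal Laurent series with coefficients
in a finite field `𝔽` of `k` elements.  We realize `ℒ` as `LaurentSeries 𝔽`
(Hahn series over `ℤ`) in the variable `T = X⁻¹`, so that `X` corresponds to `T⁻¹`
and the polynomial ring `𝔽[X]` corresponds to series supported on nonpositive
exponents.  The absolute value of `x = Σ_{i ≤ N} a_i X^i` (with `a_N ≠ 0`) is
`k^N`, i.e. `k^(-order x)` in terms of the `T`-adic order.
-/

open scoped Classical ENNReal NNReal
open MeasureTheory

noncomputable section

namespace FSBad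

/-- The field `ℒ = 𝔽((X⁻¹))`. -/
abbrev L (𝔽 : Type) [Field 𝔽] : Type := LaurentSeries 𝔽

variable {𝔽 : Type} [Field 𝔽] [Fintype 𝔽]

/-- The absolute value `‖·‖` on `ℒ`: `‖x‖ = k^(deg_X x)`, `‖0‖ = 0`. -/
def lnorm (x : L 𝔽) : ℝ := if x = 0 then 0 else (Fintype.card 𝔽 : ℝ) ^ (-x.order)

/-- Membership in the polynomial ring `𝔽[X] ⊆ ℒ` (polynomials in `X = T⁻¹`). -/
def IsPoly (x : L 𝔽) : Prop := ∀ i : ℤ, 0 < i → x.coeff i = 0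

/-- The height (sup-norm) `‖·‖_∞` on `ℒ^ι`. -/
def vnorm {ι : Type*} (x : ι → L 𝔽) : ℝ := ⨆ i, lnorm (x i)

/-- The closed ball in `ℒ^ι` with centre `c` and radius `ρ`. -/
def vball {ι : Type*} (c : ι → L 𝔽) (ρ : ℝ) : Set (ι → L 𝔽) :=
  {x | vnorm (fun i => x i - c i) ≤ ρ}

/-- `m × n` matrices over `ℒ`, identified with `ℒ^(mn)`. -/
abbrev Mat (𝔽 : Type) [Field 𝔽] (m n : ℕ) : Type := Matrix (Fin m) (Fin n) (L 𝔽)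

/-- The height of a matrix, i.e. the sup-norm on `ℒ^(mn)`. -/
def mnorm {m n : ℕ} (A : Mat 𝔽 m n) : ℝ := ⨆ p : Fin m × Fin n, lnorm (A p.1 p.2)

/-- The closed ball in `ℒ^(mn)` with centre `c` and radius `ρ`. -/
def mball {m n : ℕ} (c : Mat 𝔽 m n) (ρ : ℝ) : Set (Mat 𝔽 m n) :=
  {A | mnorm (A - c) ≤ ρ}

/-- The distance `⟨x⟩` from `x ∈ ℒ^h` to the polynomial lattice `𝔽[X]^h`. -/
def latDist {h : ℕ} (x : Fin h → L 𝔽) : ℝ :=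
  sInf {r : ℝ | ∃ p : Fin h → L 𝔽, (∀ i, IsPoly (p i)) ∧ r = vnorm (fun i => x i - p i)}

/-- The set `𝔅(m,n)` of badly approximable systems of `m` linear forms in `n`
variables over `ℒ`. -/
def Bad (𝔽 : Type) [Field 𝔽] [Fintype 𝔽] (m n : ℕ) : Set (Mat 𝔽 m n) :=
  {A | ∃ K : ℝ, 0 < K ∧ ∀ q : Fin m → L 𝔽, (∀ i, IsPoly (q i)) → q ≠ 0 →
    latDist (Matrix.vecMul q A) ^ n > K / vnorm q ^ m}

/-- The Hausdorff `s`-measure of `E ⊆ ℒ^(mn)`, defined through countable covers by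
balls of radii `< δ`, letting `δ → 0` (the infimum over `δ`-covers is nonincreasing
in `δ`, so the limit is the supremum over `δ > 0`). -/
def hMeasure {m n : ℕ} (s : ℝ) (E : Set (Mat 𝔽 m n)) : ℝ≥0∞ :=
  ⨆ (δ : ℝ) (_ : 0 < δ),
    ⨅ (c : ℕ → Mat 𝔽 m n) (ρ : ℕ → ℝ) (_ : ∀ i, 0 < ρ i ∧ ρ i < δ)
      (_ : E ⊆ ⋃ i, mball (c i) (ρ i)), ∑' i, ENNReal.ofReal (ρ i ^ s)

/-- The Hausdorff dimension of `E ⊆ ℒ^(mn)`. -/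
def hdim {m n : ℕ} (E : Set (Mat 𝔽 m n)) : ℝ :=
  sInf {s : ℝ | 0 ≤ s ∧ hMeasure s E = 0}

/-! ### Schmidt `(α,β)`-games on `ℒ^(mn)` -/

/-- A formal ball: an element of `Ω = ℒ^(mn) × ℝ`. -/
structure FBall (𝔽 : Type) [Field 𝔽] (m n : ℕ) where
  /-- centre -/
  c : Mat 𝔽 m n
  /-- radius -/
  r : ℝ

/-- Formal inclusion of formal balls: `(c₁,ρ₁) ⊆ (c₂,ρ₂)` iff `ρ₁ + ‖c₁ - c₂‖_∞ ≤ ρ₂`. -/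
def FBall.ssub {m n : ℕ} (B₁ B₂ : FBall 𝔽 m n) : Prop :=
  B₁.r + mnorm (B₁.c - B₂.c) ≤ B₂.r

/-- The subset of `ℒ^(mn)` determined by a formal ball. -/
def FBall.toSet {m n : ℕ} (B : FBall 𝔽 m n) : Set (Mat 𝔽 m n) := mball B.c B.r

/-- A strategy for White: given the balls `B₁, …, B_{i+1}` chosen by Black so far,
produce White's next ball. -/
abbrev Strategy (𝔽 : Type) [Field 𝔽] (m n : ℕ) : Type :=
  (i : ℕ) → (Fin (i + 1) → FBall 𝔽 m n) → FBall 𝔽 m n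

/-- White's move at stage `i` when following strategy `str` against Black's balls `B`. -/
def wMove {m n : ℕ} (str : Strategy 𝔽 m n) (B : ℕ → FBall 𝔽 m n) (i : ℕ) : FBall 𝔽 m n :=
  str i fun j => B j.1

/-- Black's move `B_{j+2}` is legal (for parameter `β`): it is a formal subset of
White's ball `W_{j+1}` and has radius `β · ρ(W_{j+1})`. -/
def BlackOk {m n : ℕ} (β : ℝ) (str : Strategy 𝔽 m n) (B : ℕ → FBall 𝔽 m n) (j : ℕ) : Prop :=
  (B (j + 1)).ssub (wMove str B j) ∧ (B (j + 1)).r = β * (wMove str B j).r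

/-- White's move `W_{i+1}` is legal (for parameter `α`): it is a formal subset of
Black's ball `B_{i+1}` and has radius `α · ρ(B_{i+1})`. -/
def WhiteOk {m n : ℕ} (α : ℝ) (str : Strategy 𝔽 m n) (B : ℕ → FBall 𝔽 m n) (i : ℕ) : Prop :=
  (wMove str B i).ssub (B i) ∧ (wMove str B i).r = α * (B i).r

/-- `str` is a winning strategy for White in the `(α,β;S)`-game: against any
sequence of Black balls, White's moves are legal as long as Black has played
legally so far, and if the whole play is legal then the intersection of the
chosen balls is contained in `S`. -/
def WinningStrategy {m n : ℕ} (α β : ℝ) (S : Set (Mat 𝔽 m n)) (str : Strategy 𝔽 m n) : Prop :=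
  ∀ B : ℕ → FBall 𝔽 m n, 0 ≤ (B 0).r →
    (∀ i, (∀ j < i, BlackOk β str B j) → WhiteOk α str B i) ∧
    ((∀ j, BlackOk β str B j) → (⋂ i, (B i).toSet) ⊆ S)

/-- `S` is `(α,β)`-winning. -/
def IsWinningAB {m n : ℕ} (α β : ℝ) (S : Set (Mat 𝔽 m n)) : Prop :=
  ∃ str : Strategy 𝔽 m n, WinningStrategy α β S str

/-- `S` is `α`-winning. -/
def IsWinningA {m n : ℕ} (α : ℝ) (S : Set (Mat 𝔽 m n)) : Prop :=
  ∀ β : ℝ, 0 < β → β < 1 → IsWinningAB α β S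

/-- The winning dimension of `S` (a supremum of a set of reals, which is `0` by
convention when the set is empty). -/
def windim {m n : ℕ} (S : Set (Mat 𝔽 m n)) : ℝ :=
  sSup {α : ℝ | 0 < α ∧ α < 1 ∧ IsWinningA α S}

/-! ### The matrices `Ā`, `Ā^*` and the quantities `M_v`, `D_v`, `∇D_v` -/

/-- `Ā = [[A, I_m], [I_n, 0]]`. Rows are indexed by `Fin m ⊕ Fin n`
(coordinates `q_1, …, q_{m+n}`), columns by `Fin n ⊕ Fin m`. -/
def Abar {m n : ℕ} (A : Mat 𝔽 m n) : Matrix (Fin m ⊕ Fin n) (Fin n ⊕ Fin m) (L 𝔽) :=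
  Matrix.fromBlocks A 1 1 0

/-- `Ā^* = [[Aᵀ, I_n], [I_m, 0]]`. Rows are indexed by `Fin n ⊕ Fin m`,
columns by `Fin m ⊕ Fin n`. -/
def AbarStar {m n : ℕ} (A : Mat 𝔽 m n) : Matrix (Fin n ⊕ Fin m) (Fin m ⊕ Fin n) (L 𝔽) :=
  Matrix.fromBlocks A.transpose 1 1 0

/-- The standard bilinear form `x·y = Σ_i x_i y_i` on `ℒ^ι`. -/
def dotL {ι : Type*} [Fintype ι] (x y : ι → L 𝔽) : L 𝔽 := ∑ i, x i * y i

/-- Strictly increasing `v`-tuples `1 ≤ i_1 < ⋯ < i_v ≤ m`. -/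
def IncTuple (v m : ℕ) : Type := {f : Fin v → Fin m // StrictMono f}

/-- The vector `M_v(A) ∈ ℒ^(C(m,v)²)` of the determinants
`det (y_{i_r} · C_{j_s}(Ā^*))_{1 ≤ r,s ≤ v}` over all strictly increasing index
tuples.  (For `v = 0` every coordinate is an empty determinant, i.e. `1`.) -/
def MvVec {m n : ℕ} (y : Fin m → (Fin n ⊕ Fin m → L 𝔽)) (v : ℕ) (A : Mat 𝔽 m n) :
    IncTuple v m × IncTuple v m → L 𝔽 := fun p =>
  Matrix.det (Matrix.of fun r s : Fin v =>
    dotL (y (p.1.1 r)) fun t => AbarStar A t (Sum.inl (p.2.1 s)))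

/-- `‖M_v(A)‖_∞`. -/
def MvNorm {m n : ℕ} (y : Fin m → (Fin n ⊕ Fin m → L 𝔽)) (v : ℕ) (A : Mat 𝔽 m n) : ℝ :=
  vnorm (MvVec y v A)

/-- `M_v(K) = max_{A ∈ K} ‖M_v(A)‖_∞` for `K ⊆ ℒ^(mn)`. -/
def MvSet {m n : ℕ} (y : Fin m → (Fin n ⊕ Fin m → L 𝔽)) (v : ℕ) (K : Set (Mat 𝔽 m n)) : ℝ :=
  sSup {r : ℝ | ∃ A ∈ K, r = MvNorm y v A}

/-- `D_v(A) = det (y_h · C_l(Ā^*))_{1 ≤ h,l ≤ v}`. -/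
def Dv {m n : ℕ} (y : Fin m → (Fin n ⊕ Fin m → L 𝔽)) (v : ℕ) (hv : v ≤ m)
    (A : Mat 𝔽 m n) : L 𝔽 :=
  Matrix.det (Matrix.of fun h l : Fin v =>
    dotL (y (Fin.castLE hv h)) fun t => AbarStar A t (Sum.inl (Fin.castLE hv l)))

/-- The discrete gradient `∇D_v(A) ∈ ℒ^(mn)`, with coordinates
`D_v(A + E_{ij}) - D_v(A)`. -/
def gradDv {m n : ℕ} (y : Fin m → (Fin n ⊕ Fin m → L 𝔽)) (v : ℕ) (hv : v ≤ m)
    (A : Mat 𝔽 m n) : Fin m × Fin n → L 𝔽 := fun p =>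
  Dv y v hv (A + Matrix.single p.1 p.2 1) - Dv y v hv A

/-- `y_1, …, y_m ∈ ℒ^(m+n)` form an orthonormal system: `y_h · y_{h'} = δ_{h h'}`
and `‖t_1 y_1 + ⋯ + t_m y_m‖_∞ = max_h ‖t_h‖`. -/
def OrthoSystem {m n : ℕ} (y : Fin m → (Fin n ⊕ Fin m → L 𝔽)) : Prop :=
  (∀ h h', dotL (y h) (y h') = if h = h' then 1 else 0) ∧
  (∀ t : Fin m → L 𝔽, vnorm (fun r => ∑ h, t h * y h r) = ⨆ h, lnorm (t h))

/-! ### Distance functions, parallelepipeds and successive minima -/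

/-- The `j`-th successive minimum of a distance function `F` on `ℒ^N`: the infimum
of all `λ > 0` such that `{F < λ}` contains `j` linearly independent points of
`𝔽[X]^N`. -/
def succMin {N : ℕ} (F : (Fin N → L 𝔽) → ℝ) (j : ℕ) : ℝ :=
  sInf {lam : ℝ | 0 < lam ∧ ∃ v : Fin j → (Fin N → L 𝔽),
    (∀ r, ∀ i, IsPoly (v r i)) ∧ LinearIndependent (L 𝔽) v ∧ ∀ r, F (v r) < lam}

/-- The distance function `F_A(x) = max_j c_j⁻¹ ‖Σ_i x_i a_{ij}‖`. -/
def FA {N : ℕ} (A : Matrix (Fin N) (Fin N) (L 𝔽)) (c : Fin N → ℝ)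
    (x : Fin N → L 𝔽) : ℝ :=
  ⨆ j, (c j)⁻¹ * lnorm (∑ i, x i * A i j)

/-- The parallelepiped `P_A(λ) = {x ∈ ℒ^N : F_A(x) < λ}`. -/
def PA {N : ℕ} (A : Matrix (Fin N) (Fin N) (L 𝔽)) (c : Fin N → ℝ) (lam : ℝ) :
    Set (Fin N → L 𝔽) := {x | FA A c x < lam}

/-- The polar distance function `F_A^*(y) = sup_{x ≠ 0} ‖x·y‖ / F_A(x)`. -/
def FAstar {N : ℕ} (A : Matrix (Fin N) (Fin N) (L 𝔽)) (c : Fin N → ℝ)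
    (y : Fin N → L 𝔽) : ℝ :=
  ⨆ x : {x : Fin N → L 𝔽 // x ≠ 0}, lnorm (dotL x.1 y) / FA A c x.1

/-! ### Haar measure, characterized by translation invariance and normalization -/

/-- The Borel σ-algebra on `ℒ^N`, generated by the balls. -/
def vecSigma (𝔽 : Type) [Field 𝔽] [Fintype 𝔽] (N : ℕ) : MeasurableSpace (Fin N → L 𝔽) :=
  MeasurableSpace.generateFrom {s | ∃ c ρ, (0 : ℝ) < ρ ∧ s = vball c ρ}

/-- `μ` is the Haar measure on `ℒ^N`: translation invariant and normalized so that
the unit ball `I^N` has measure `1` (these properties determine it uniquely). -/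
def IsHaarVec {N : ℕ} (μ : @Measure (Fin N → L 𝔽) (vecSigma 𝔽 N)) : Prop :=
  (∀ (v : Fin N → L 𝔽) (s : Set (Fin N → L 𝔽)), μ ((fun x => x + v) ⁻¹' s) = μ s) ∧
  μ {x | ∀ i, lnorm (x i) < 1} = 1

/-- The Borel σ-algebra on `ℒ^(mn)`, generated by the balls. -/
def matSigma (𝔽 : Type) [Field 𝔽] [Fintype 𝔽] (m n : ℕ) : MeasurableSpace (Mat 𝔽 m n) :=
  MeasurableSpace.generateFrom {s | ∃ c ρ, (0 : ℝ) < ρ ∧ s = mball c ρ}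

/-- `μ` is the Haar measure on `ℒ^(mn)`: translation invariant and normalized so
that the unit ball `I^(mn)` has measure `1`. -/
def IsHaarMat {m n : ℕ} (μ : @Measure (Mat 𝔽 m n) (matSigma 𝔽 m n)) : Prop :=
  (∀ (v : Mat 𝔽 m n) (s : Set (Mat 𝔽 m n)), μ ((fun x => x + v) ⁻¹' s) = μ s) ∧
  μ {A | ∀ i j, lnorm (A i j) < 1} = 1

/-! ### The constants of Section 3 -/

/-- `τ = m/(m+n)`. -/
def tau (m n : ℕ) : ℝ := m / (m + n)

/-- `δ = R^(-m(m+n)²)`. -/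
def del (R : ℝ) (m n : ℕ) : ℝ := R ^ (-((m : ℝ) * ((m : ℝ) + n) ^ 2))

/-- `δ* = R^(-n(m+n)²)`. -/
def delStar (R : ℝ) (m n : ℕ) : ℝ := R ^ (-((n : ℝ) * ((m : ℝ) + n) ^ 2))

/-!
This is a transference argument. Write `R = k ^ Λ`, and suppose that `n + 1` independent solutions
of the first system were given. Passing from `A ∈ B` to the centre `C` of `B` changes the linear
forms by no more than their size, so all of them may be evaluated at `C`. Their combinations with
polynomial coefficients of degree less than `d` give, in the first `m` coordinates, an
`𝔽`-space of dimension `(n + 1) d` of vectors of polynomials of degree less than `b`. For `u` in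
this space and `p ∈ 𝔽[X]ⁿ` of degree less than `a`, the vector `u C` is so close to `𝔽[X]ⁿ` that
`u · C p` has no term in `X⁻¹`. Since `m b < n a + (n + 1) d`, some `p ≠ 0` then pairs to zero with
every vector of polynomials of degree less than `b`. Pairing with the monomials shows that `C p`
has no terms in `X⁻¹, …, X⁻ᵇ` apart from a polynomial part, so `p` solves the second system at `C`.
-/

theorem exists_mem_ne_zero_forall_apply_eq_zero {K V W : Type*} [Field K] [AddCommGroup V]
    [Module K V] [AddCommGroup W] [Module K W] (B : V →ₗ[K] W →ₗ[K] K) {S U : Submodule K V}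
    {P : Submodule K W} [FiniteDimensional K U] [FiniteDimensional K P] (hSU : S ≤ U)
    (hB : ∀ u ∈ S, ∀ p ∈ P, B u p = 0)
    (hdim : Module.finrank K U < Module.finrank K P + Module.finrank K S) :
    ∃ p ∈ P, p ≠ 0 ∧ ∀ u ∈ U, B u p = 0 := by
  let f : P →ₗ[K] Module.Dual K U := (B.flip.domRestrict P).compl₂ U.subtype
  let S' : Submodule K U := S.submoduleOf U
  have hS' : Module.finrank K S' = Module.finrank K S :=
    (Submodule.submoduleOfEquivOfLe hSU).finrank_eq
  have hrange : LinearMap.range f ≤ S'.dualAnnihilator := by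
    rintro _ ⟨p, rfl⟩
    exact (Submodule.mem_dualAnnihilator _).2 fun u hu ↦ hB u hu p p.2
  have hker : LinearMap.ker f ≠ ⊥ := by
    intro h
    have hann := Subspace.finrank_add_finrank_dualAnnihilator_eq S'
    have hle := Submodule.finrank_mono hrange
    rw [LinearMap.finrank_range_of_inj (LinearMap.ker_eq_bot.1 h)] at hle
    lia
  obtain ⟨p, hp, hp0⟩ := (Submodule.ne_bot_iff _).1 hker
  exact ⟨p, p.2, by simpa using hp0, fun u hu ↦ LinearMap.congr_fun hp ⟨u, hu⟩⟩

/-- The subspace of functions `ι → V` with values in `p`, as functions `ι → p`. -/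
def piUnivEquiv {K V : Type*} (ι : Type*) [Semiring K] [AddCommMonoid V] [Module K V]
    (p : Submodule K V) : Submodule.pi Set.univ (fun _ : ι ↦ p) ≃ₗ[K] (ι → p) where
  toFun x i := ⟨x.1 i, x.2 i trivial⟩
  invFun y := ⟨fun i ↦ y i, fun i _ ↦ (y i).2⟩
  map_add' _ _ := rfl
  map_smul' _ _ := rfl

section Transference

open scoped Matrix

variable {F : Type} [Field F]

-- Instance search sees `F` acting on `L F` coefficientwise, but reaches the algebra structure
-- through power series, so the compatibility of the two has to be supplied.
local instance : IsScalarTower F (L F) (L F) :=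
  @IsScalarTower.right F (L F) _ _ HahnSeries.instAlgebra

local instance : SMulCommClass F (L F) (L F) :=
  @Algebra.to_smulCommClass F (L F) _ _ HahnSeries.instAlgebra

theorem IsPoly.mul {x y : L F} (hx : IsPoly x) (hy : IsPoly y) : IsPoly (x * y) := by
  intro i hi
  rw [HahnSeries.coeff_mul]
  refine Finset.sum_eq_zero fun ij hij ↦ ?_
  have hsum : ij.1 + ij.2 = i := (Finset.mem_antidiagonal.1 hij).2.2
  rcases lt_or_ge 0 ij.1 with h | h
  · rw [hx _ h, zero_mul]
  · rw [hy _ (by lia), mul_zero]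

variable (F) in
/-- The polynomial ring `𝔽[X]` as an `𝔽`-subspace of `ℒ`. -/
def polys : Submodule F (L F) where
  carrier := {x | IsPoly x}
  zero_mem' _ _ := rfl
  add_mem' hx hy i hi := by rw [HahnSeries.coeff_add, hx i hi, hy i hi, add_zero]
  smul_mem' c x hx i hi := by rw [HahnSeries.coeff_smul, hx i hi, smul_zero]

theorem dotProduct_mem_polys {ι : Type*} [Fintype ι] {x y : ι → L F} (hx : ∀ i, x i ∈ polys F)
    (hy : ∀ i, y i ∈ polys F) : x ⬝ᵥ y ∈ polys F :=
  Submodule.sum_mem _ fun i _ ↦ (hx i).mul (hy i)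

variable (F) in
/-- The bilinear form sending `(u, p)` to the coefficient of `X⁻¹` in `u · A p`, which is the
coefficient of index `1` in the variable `T = X⁻¹`. -/
def residuePairing {ι κ : Type*} [Fintype ι] [Fintype κ] (A : Matrix ι κ (L F)) :
    (ι → L F) →ₗ[F] (κ → L F) →ₗ[F] F :=
  LinearMap.mk₂ F (fun u p ↦ (u ⬝ᵥ A *ᵥ p).coeff 1)
    (fun _ _ _ ↦ by rw [add_dotProduct, HahnSeries.coeff_add])
    (fun _ _ _ ↦ by rw [smul_dotProduct, HahnSeries.coeff_smul])
    (fun _ _ _ ↦ by rw [Matrix.mulVec_add, dotProduct_add, HahnSeries.coeff_add])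
    (fun _ _ _ ↦ by rw [Matrix.mulVec_smul, dotProduct_smul, HahnSeries.coeff_smul])

theorem one_lt_card_field : (1 : ℝ) < Fintype.card 𝔽 := by
  exact_mod_cast Fintype.one_lt_card (α := 𝔽)

theorem lnorm_nonneg (x : L 𝔽) : 0 ≤ lnorm x := by
  unfold lnorm
  split_ifs <;> positivity

theorem lnorm_mul (x y : L 𝔽) : lnorm (x * y) = lnorm x * lnorm y := by
  by_cases hx : x = 0
  · simp [lnorm, hx]
  by_cases hy : y = 0
  · simp [lnorm, hy]
  have hk : (Fintype.card 𝔽 : ℝ) ≠ 0 := (zero_lt_one.trans one_lt_card_field).ne'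
  simp only [lnorm, mul_eq_zero, hx, hy, or_self, if_false]
  rw [HahnSeries.order_mul hx hy, neg_add, zpow_add₀ hk]

theorem lnorm_lt_rpow_iff {x : L 𝔽} {s : ℝ} :
    lnorm x < (Fintype.card 𝔽 : ℝ) ^ s ↔ ∀ i : ℤ, (i : ℝ) ≤ -s → x.coeff i = 0 := by
  have hk := one_lt_card_field (𝔽 := 𝔽)
  by_cases hx : x = 0
  · simpa [hx, lnorm] using Real.rpow_pos_of_pos (zero_lt_one.trans hk) s
  rw [lnorm, if_neg hx, ← Real.rpow_intCast, Real.rpow_lt_rpow_left_iff hk, Int.cast_neg]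
  refine ⟨fun h i hi ↦ HahnSeries.coeff_eq_zero_of_lt_order ?_, fun h ↦ ?_⟩
  · exact_mod_cast (by linarith : (i : ℝ) < x.order)
  · by_contra! hs
    exact hx (HahnSeries.coeff_order_eq_zero.1 (h _ (by linarith)))

variable (𝔽) in
/-- The subspace of those `x ∈ ℒ` with `‖x‖ < k ^ s`; a real exponent `s` lets it express every
positive strict bound on the absolute value. -/
def normLT (s : ℝ) : Submodule 𝔽 (L 𝔽) where
  carrier := {x | lnorm x < (Fintype.card 𝔽 : ℝ) ^ s}
  zero_mem' := lnorm_lt_rpow_iff.2 fun _ _ ↦ rfl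
  add_mem' {x y} hx hy := lnorm_lt_rpow_iff.2 fun i hi ↦ by
    rw [HahnSeries.coeff_add, lnorm_lt_rpow_iff.1 hx i hi, lnorm_lt_rpow_iff.1 hy i hi, add_zero]
  smul_mem' c x hx := lnorm_lt_rpow_iff.2 fun i hi ↦ by
    rw [HahnSeries.coeff_smul, lnorm_lt_rpow_iff.1 hx i hi, smul_zero]

theorem mem_normLT_iff_coeff {x : L 𝔽} {s : ℝ} :
    x ∈ normLT 𝔽 s ↔ ∀ i : ℤ, (i : ℝ) ≤ -s → x.coeff i = 0 :=
  lnorm_lt_rpow_iff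

theorem normLT_mono : Monotone (normLT 𝔽) := fun _ _ hst _ hx ↦
  hx.trans_le (Real.rpow_le_rpow_of_exponent_le one_lt_card_field.le hst)

theorem dotProduct_mem_normLT {ι : Type*} [Fintype ι] {x y : ι → L 𝔽} {s t : ℝ}
    (hx : ∀ i, x i ∈ normLT 𝔽 s) (hy : ∀ i, y i ∈ normLT 𝔽 t) : x ⬝ᵥ y ∈ normLT 𝔽 (s + t) := by
  refine Submodule.sum_mem _ fun i _ ↦ ?_
  change lnorm (x i * y i) < _
  rw [lnorm_mul, Real.rpow_add (zero_lt_one.trans one_lt_card_field)]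
  exact mul_lt_mul'' (hx i) (hy i) (lnorm_nonneg _) (lnorm_nonneg _)

theorem eq_zero_of_mem_polys_of_mem_normLT_zero {x : L 𝔽} (hx : x ∈ polys 𝔽)
    (hx' : x ∈ normLT 𝔽 0) : x = 0 := by
  ext i
  rcases lt_or_ge 0 i with hi | hi
  · exact hx i hi
  · exact mem_normLT_iff_coeff.1 hx' i (by simpa using hi)

theorem exists_mem_polys_add_mem_normLT {x : L 𝔽} {b : ℕ}
    (hx : ∀ j < b, x.coeff (j + 1) = 0) : ∃ p ∈ polys 𝔽, x + p ∈ normLT 𝔽 (-b) := by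
  refine ⟨-HahnSeries.truncLT 1 x, fun i hi ↦ ?_, mem_normLT_iff_coeff.2 fun i hi ↦ ?_⟩
  · rw [HahnSeries.coeff_neg, HahnSeries.coeff_truncLT_of_le hi, neg_zero]
  rw [HahnSeries.coeff_add, HahnSeries.coeff_neg]
  rcases lt_or_ge i 1 with h | h
  · rw [HahnSeries.coeff_truncLT_of_lt h, add_neg_cancel]
  · have hib : i ≤ b := by exact_mod_cast hi.trans_eq (neg_neg _)
    have := hx (i - 1).toNat (by lia)
    rw [HahnSeries.coeff_truncLT_of_le h, neg_zero, add_zero]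
    rwa [Int.toNat_of_nonneg (by lia), sub_add_cancel] at this

variable (𝔽) in
/-- The space of polynomials in `X` of degree less than `d`. -/
def polysLT (d : ℕ) : Submodule 𝔽 (L 𝔽) := polys 𝔽 ⊓ normLT 𝔽 d

theorem polysLT_eq_map_supported (d : ℕ) :
    polysLT 𝔽 d = (Finsupp.supported 𝔽 𝔽 (Set.Ioc (-d : ℤ) 0)).map
      (HahnSeries.ofFinsuppLinearMap 𝔽) := by
  ext x
  constructor
  · rintro ⟨hx, hx'⟩
    have hsupp : Function.support x.coeff ⊆ Set.Ioc (-d : ℤ) 0 := by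
      refine fun i hi ↦ ⟨?_, ?_⟩ <;> by_contra! h
      · exact hi (mem_normLT_iff_coeff.1 hx' i (by exact_mod_cast h))
      · exact hi (hx i h)
    exact ⟨.ofSupportFinite x.coeff ((Set.finite_Ioc _ _).subset hsupp),
      by simpa [Finsupp.mem_supported, Finsupp.ofSupportFinite] using hsupp, rfl⟩
  · rintro ⟨f, hf, rfl⟩
    have hzero : ∀ i ∉ Set.Ioc (-d : ℤ) 0, f i = 0 := fun i hi ↦
      Finsupp.notMem_support_iff.1 fun h ↦ hi (hf h)
    refine ⟨fun i hi ↦ hzero i fun h ↦ h.2.not_gt hi, mem_normLT_iff_coeff.2 fun i hi ↦ ?_⟩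
    exact hzero i fun h ↦ h.1.not_ge (by exact_mod_cast hi)

variable (𝔽) in
/-- A polynomial in `X` of degree less than `d` as the family of its coefficients, indexed by the
exponents `-d < i ≤ 0` of `T = X⁻¹`. -/
def polysLTEquiv (d : ℕ) : (Set.Ioc (-d : ℤ) 0 →₀ 𝔽) ≃ₗ[𝔽] polysLT 𝔽 d :=
  (Finsupp.supportedEquivFinsupp _).symm ≪≫ₗ
    Submodule.equivMapOfInjective (HahnSeries.ofFinsuppLinearMap 𝔽)
      (fun _ _ h ↦ Finsupp.ext fun i ↦ congr_arg (HahnSeries.coeff · i) h) _ ≪≫ₗ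
    LinearEquiv.ofEq _ _ (polysLT_eq_map_supported d).symm

variable (𝔽) in
/-- The space of vectors of polynomials in `X` of degree less than `d`. -/
def polyBox (ι : Type*) (d : ℕ) : Submodule 𝔽 (ι → L 𝔽) :=
  Submodule.pi Set.univ fun _ ↦ polysLT 𝔽 d

variable (𝔽) in
/-- A vector of polynomials of degree less than `d` as the family of its coefficients, which gives
the dimension of `polyBox`. -/
def polyBoxEquiv (ι : Type*) (d : ℕ) : polyBox 𝔽 ι d ≃ₗ[𝔽] (ι → Set.Ioc (-d : ℤ) 0 →₀ 𝔽) :=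
  piUnivEquiv ι (polysLT 𝔽 d) ≪≫ₗ LinearEquiv.piCongrRight fun _ ↦ (polysLTEquiv 𝔽 d).symm

instance finiteDimensional_polyBox (ι : Type*) [Finite ι] (d : ℕ) :
    FiniteDimensional 𝔽 (polyBox 𝔽 ι d) :=
  .of_injective _ (polyBoxEquiv 𝔽 ι d).injective

theorem finrank_polyBox (ι : Type*) [Fintype ι] (d : ℕ) :
    Module.finrank 𝔽 (polyBox 𝔽 ι d) = Fintype.card ι * d := by
  rw [(polyBoxEquiv 𝔽 ι d).finrank_eq, Module.finrank_pi_fintype]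
  simp

theorem mem_polyBox {ι : Type*} {d : ℕ} {x : ι → L 𝔽} :
    x ∈ polyBox 𝔽 ι d ↔ (∀ i, x i ∈ polys 𝔽) ∧ ∀ i, x i ∈ normLT 𝔽 d := by
  simp only [polyBox, polysLT, Submodule.mem_pi, Set.mem_univ, true_imp_iff, Submodule.mem_inf,
    forall_and]

theorem exists_polys_mulVec_add_mem_normLT {ι κ : Type*} [Fintype ι] [Fintype κ]
    {A : Matrix ι κ (L 𝔽)} {p : κ → L 𝔽} {b : ℕ}
    (h : ∀ u ∈ polyBox 𝔽 ι b, residuePairing 𝔽 A u p = 0) :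
    ∃ p' : ι → L 𝔽, (∀ i, p' i ∈ polys 𝔽) ∧ ∀ i, (A *ᵥ p + p') i ∈ normLT 𝔽 (-b) := by
  have hcoeff (i : ι) (j : ℕ) (hj : j < b) : ((A *ᵥ p) i).coeff (j + 1) = 0 := by
    have hu : Pi.single i (HahnSeries.single (-j : ℤ) 1) ∈ polyBox 𝔽 ι b := by
      refine Submodule.mem_pi.2 fun i' _ ↦ ?_
      rcases eq_or_ne i' i with rfl | hi
      · rw [Pi.single_eq_same]
        refine ⟨fun l hl ↦ HahnSeries.coeff_single_of_ne (by lia),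
          mem_normLT_iff_coeff.2 fun l hl ↦ HahnSeries.coeff_single_of_ne ?_⟩
        have : l ≤ -b := by exact_mod_cast hl
        lia
      · rw [Pi.single_eq_of_ne hi]
        exact zero_mem _
    have := h _ hu
    rw [residuePairing, LinearMap.mk₂_apply, single_dotProduct] at this
    rwa [show (1 : ℤ) = (j + 1) + -j by ring, HahnSeries.coeff_single_mul_add, one_mul] at this
  choose p' hp' hlt using fun i ↦ exists_mem_polys_add_mem_normLT (hcoeff i)
  exact ⟨p', hp', hlt⟩

section Combinations

variable {ι κ ν : Type*} [Fintype ι] [Fintype ν] {A : Matrix ι κ (L 𝔽)}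
  {q₁ : Matrix ν ι (L 𝔽)} {q₂ : Matrix ν κ (L 𝔽)} {e : ℝ} {d : ℕ}

theorem eq_zero_of_vecMul_eq_zero (hq₂ : ∀ r j, q₂ r j ∈ polys 𝔽)
    (hind : LinearIndependent (L 𝔽) (Matrix.fromCols q₁ q₂))
    (he : ∀ r j, (q₁ * A + q₂) r j ∈ normLT 𝔽 (-e)) (hde : d ≤ e)
    {x : ν → L 𝔽} (hx : x ∈ polyBox 𝔽 ν d) (h : x ᵥ* q₁ = 0) : x = 0 := by
  rw [mem_polyBox] at hx
  have hx₂ : x ᵥ* q₂ = x ᵥ* (q₁ * A + q₂) := by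
    rw [Matrix.vecMul_add, ← Matrix.vecMul_vecMul, h, Matrix.zero_vecMul, zero_add]
  have hx₂' : x ᵥ* q₂ = 0 := funext fun j ↦ eq_zero_of_mem_polys_of_mem_normLT_zero
    (dotProduct_mem_polys hx.1 fun r ↦ hq₂ r j)
    (hx₂ ▸ normLT_mono (by linarith) (dotProduct_mem_normLT hx.2 fun r ↦ he r j))
  refine Matrix.vecMul_injective_iff.2 hind ?_
  change x ᵥ* Matrix.fromCols q₁ q₂ = 0 ᵥ* Matrix.fromCols q₁ q₂
  rw [Matrix.vecMul_fromCols, h, hx₂', Matrix.zero_vecMul]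
  ext (_ | _) <;> rfl

variable [Fintype κ]

theorem residuePairing_vecMul_eq_zero (hq₂ : ∀ r j, q₂ r j ∈ polys 𝔽)
    (he : ∀ r j, (q₁ * A + q₂) r j ∈ normLT 𝔽 (-e)) {a : ℕ} (hda : d + a + 1 ≤ e)
    {x : ν → L 𝔽} (hx : x ∈ polyBox 𝔽 ν d) {p : κ → L 𝔽} (hp : p ∈ polyBox 𝔽 κ a) :
    residuePairing 𝔽 A (x ᵥ* q₁) p = 0 := by
  rw [mem_polyBox] at hx hp
  have hsplit : x ᵥ* q₁ ⬝ᵥ A *ᵥ p = x ᵥ* (q₁ * A + q₂) ⬝ᵥ p - x ᵥ* q₂ ⬝ᵥ p := by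
    rw [Matrix.dotProduct_mulVec, Matrix.vecMul_vecMul, Matrix.vecMul_add, add_dotProduct,
      add_sub_cancel_right]
  have hsmall : x ᵥ* (q₁ * A + q₂) ⬝ᵥ p ∈ normLT 𝔽 (d + -e + a) :=
    dotProduct_mem_normLT (fun j ↦ dotProduct_mem_normLT hx.2 fun r ↦ he r j) hp.2
  have hpoly : x ᵥ* q₂ ⬝ᵥ p ∈ polys 𝔽 :=
    dotProduct_mem_polys (fun j ↦ dotProduct_mem_polys hx.1 fun r ↦ hq₂ r j) hp.1
  rw [residuePairing, LinearMap.mk₂_apply, hsplit, HahnSeries.coeff_sub, hpoly 1 one_pos,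
    mem_normLT_iff_coeff.1 hsmall 1 (by push_cast; linarith), sub_zero]

theorem exists_transposed_solution (hq₁ : ∀ r i, q₁ r i ∈ polys 𝔽) (hq₂ : ∀ r j, q₂ r j ∈ polys 𝔽)
    (hind : LinearIndependent (L 𝔽) (Matrix.fromCols q₁ q₂)) {η : ℝ} {a b : ℕ}
    (hη : ∀ r i, q₁ r i ∈ normLT 𝔽 η) (he : ∀ r j, (q₁ * A + q₂) r j ∈ normLT 𝔽 (-e))
    (hb : d + η ≤ b) (hda : d + a + 1 ≤ e)
    (hcard : Fintype.card ι * b < Fintype.card κ * a + Fintype.card ν * d) :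
    ∃ (p₁ : κ → L 𝔽) (p₂ : ι → L 𝔽), (∀ j, p₁ j ∈ polys 𝔽) ∧ (∀ i, p₂ i ∈ polys 𝔽) ∧ p₁ ≠ 0 ∧
      (∀ j, p₁ j ∈ normLT 𝔽 a) ∧ ∀ i, (A *ᵥ p₁ + p₂) i ∈ normLT 𝔽 (-b) := by
  let f : polyBox 𝔽 ν d →ₗ[𝔽] (ι → L 𝔽) :=
    (q₁.vecMulLinear.restrictScalars 𝔽).domRestrict (polyBox 𝔽 ν d)
  have hf : Function.Injective f := (injective_iff_map_eq_zero f).2 fun x hx ↦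
    Subtype.ext <| eq_zero_of_vecMul_eq_zero hq₂ hind he
      (by linarith [a.cast_nonneg (α := ℝ)]) x.2 hx
  have hle : LinearMap.range f ≤ polyBox 𝔽 ι b := by
    rintro _ ⟨x, rfl⟩
    have hx := mem_polyBox.1 x.2
    exact mem_polyBox.2 ⟨fun i ↦ dotProduct_mem_polys hx.1 fun r ↦ hq₁ r i,
      fun i ↦ normLT_mono hb (dotProduct_mem_normLT hx.2 fun r ↦ hη r i)⟩
  have hannih : ∀ u ∈ LinearMap.range f, ∀ p ∈ polyBox 𝔽 κ a, residuePairing 𝔽 A u p = 0 := by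
    rintro _ ⟨x, rfl⟩ p hp
    exact residuePairing_vecMul_eq_zero hq₂ he hda x.2 hp
  obtain ⟨p₁, hp₁, hne, hp₁A⟩ := exists_mem_ne_zero_forall_apply_eq_zero
    (residuePairing 𝔽 A) hle hannih (by
      rwa [LinearMap.finrank_range_of_inj hf, finrank_polyBox, finrank_polyBox, finrank_polyBox])
  obtain ⟨p₂, hp₂, hlt⟩ := exists_polys_mulVec_add_mem_normLT hp₁A
  rw [mem_polyBox] at hp₁
  exact ⟨p₁, p₂, hp₁.1, hp₂, hne, hp₁.2, hlt⟩

end Combinations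

section Systems

variable {m n : ℕ}

theorem iSup_lnorm_lt_rpow_iff {ι : Type*} [Finite ι] [Nonempty ι] {f : ι → L 𝔽} {s : ℝ} :
    ⨆ i, lnorm (f i) < (Fintype.card 𝔽 : ℝ) ^ s ↔ ∀ i, f i ∈ normLT 𝔽 s := by
  refine ⟨fun h i ↦ (Finite.le_ciSup (fun i ↦ lnorm (f i)) i).trans_lt h, fun h ↦ ?_⟩
  obtain ⟨i, hi⟩ := exists_eq_ciSup_of_finite (f := fun i ↦ lnorm (f i))
  exact hi ▸ h i

theorem iSup_lnorm_pos {ι : Type*} [Finite ι] {f : ι → L 𝔽} (hf : f ≠ 0) :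
    0 < ⨆ i, lnorm (f i) := by
  obtain ⟨i, hi : f i ≠ 0⟩ := Function.ne_iff.1 hf
  refine lt_of_lt_of_le ?_ (Finite.le_ciSup (fun i ↦ lnorm (f i)) i)
  rw [lnorm, if_neg hi]
  exact zpow_pos (zero_lt_one.trans one_lt_card_field) _

theorem self_mem_mball {c A : Mat 𝔽 m n} {ρ : ℝ} (hA : A ∈ mball c ρ) : c ∈ mball c ρ := by
  have hzero : mnorm (c - c) = 0 := by simp [mnorm, lnorm]
  exact (hzero.trans_le (Real.iSup_nonneg fun _ ↦ lnorm_nonneg _)).trans hA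

theorem sub_apply_mem_normLT_of_mem_mball {c A : Mat 𝔽 m n} {ρ s : ℝ}
    (hρ : ρ < (Fintype.card 𝔽 : ℝ) ^ s) (hA : A ∈ mball c ρ) (i : Fin m) (j : Fin n) :
    (A - c) i j ∈ normLT 𝔽 s :=
  (Finite.le_ciSup (fun p : Fin m × Fin n ↦ lnorm ((A - c) p.1 p.2)) (i, j)).trans_lt
    (hA.trans_lt hρ)

theorem vecMul_add_mem_normLT_of_sub {ι κ : Type*} [Fintype ι] {A C : Matrix ι κ (L 𝔽)}
    {x : ι → L 𝔽} {y : κ → L 𝔽} {s t : ℝ} (hx : ∀ i, x i ∈ normLT 𝔽 s)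
    (hAC : ∀ i j, (A - C) i j ∈ normLT 𝔽 t) {j : κ} (h : (x ᵥ* A + y) j ∈ normLT 𝔽 (s + t)) :
    (x ᵥ* C + y) j ∈ normLT 𝔽 (s + t) := by
  have hmove : x ᵥ* C + y = x ᵥ* A + y - x ᵥ* (A - C) := by
    rw [Matrix.vecMul_sub]
    abel
  rw [hmove]
  exact sub_mem h (dotProduct_mem_normLT hx fun i ↦ hAC i j)

theorem vecMul_Abar_inl (q : Fin m ⊕ Fin n → L F) (A : Mat F m n) (j : Fin n) :
    Matrix.vecMul q (Abar A) (Sum.inl j) = ((q ∘ Sum.inl) ᵥ* A + q ∘ Sum.inr) j := by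
  rw [Abar, Matrix.vecMul_fromBlocks, Matrix.vecMul_one, Sum.elim_inl]

theorem vecMul_AbarStar_inl (q : Fin n ⊕ Fin m → L F) (A : Mat F m n) (i : Fin m) :
    Matrix.vecMul q (AbarStar A) (Sum.inl i) = (A *ᵥ (q ∘ Sum.inl) + q ∘ Sum.inr) i := by
  rw [AbarStar, Matrix.vecMul_fromBlocks, Matrix.vecMul_one, Matrix.vecMul_transpose, Sum.elim_inl]

theorem del_rpow_mul_rpow {k : ℝ} (hk : 0 < k) (Λ x : ℝ) :
    del (k ^ Λ) m n * (k ^ Λ) ^ x = k ^ (Λ * (x - m * (m + n) ^ 2)) := by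
  rw [del, ← Real.rpow_add (by positivity), ← Real.rpow_mul hk.le]
  ring_nf

theorem delStar_rpow_mul_rpow {k : ℝ} (hk : 0 < k) (Λ x : ℝ) :
    delStar (k ^ Λ) m n * (k ^ Λ) ^ x = k ^ (Λ * (x - n * (m + n) ^ 2)) := by
  rw [delStar, ← Real.rpow_add (by positivity), ← Real.rpow_mul hk.le]
  ring_nf

end Systems

section Exponents

variable {m n : ℕ}

theorem add_mul_tau (hm : 0 < m) : (m + n : ℝ) * tau m n = m :=
  mul_div_cancel₀ _ (by positivity)

theorem tau_nonneg : 0 ≤ tau m n := by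
  unfold tau
  positivity

theorem succ_mul_tau_le (hm : 0 < m) : (n + 1 : ℝ) * tau m n ≤ m := by
  have hm' : (1 : ℝ) ≤ m := by exact_mod_cast hm
  nlinarith [add_mul_tau (n := n) hm, mul_nonneg (sub_nonneg.2 hm') (tau_nonneg (m := m) (n := n))]

theorem mul_tau_add_one_le (hm : 0 < m) (hn : 0 < n) :
    (n * tau m n + 1 : ℝ) ≤ m * (m + n) ^ 2 := by
  have hm' : (1 : ℝ) ≤ m := by exact_mod_cast hm
  have hn' : (1 : ℝ) ≤ n := by exact_mod_cast hn
  nlinarith [succ_mul_tau_le (n := n) hm, tau_nonneg (m := m) (n := n)]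

theorem sq_add_mul_tau_add_one_le (hm : 0 < m) (hn : 0 < n) :
    (m ^ 2 + (n + 1) * (n * tau m n) + 1 : ℝ) ≤ (m + n) ^ 3 := by
  have hm' : (1 : ℝ) ≤ m := by exact_mod_cast hm
  have hn' : (1 : ℝ) ≤ n := by exact_mod_cast hn
  have hτ : (n + 1) * (n * tau m n) ≤ m * n := by
    nlinarith [succ_mul_tau_le (n := n) hm]
  have : (1 : ℝ) ≤ (m + n) * ((m + n) ^ 2 - m) := by nlinarith
  linarith

-- Rounding `α + β - a` up, instead of `β`, keeps the count positive when `α < 0` and so `a = 0`.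
theorem exists_degree_bounds_of_count (hm : 0 < m) {α β e η : ℝ} (he : 1 ≤ e) (hαe : α + 1 ≤ e)
    (hβ : 0 ≤ β) (hαβ : 0 ≤ α + β) (hη : e + η ≤ α + β + 1)
    (hcount : m * (α + β) + 2 * (m + n + 1) ≤ (n + 1) * e + (m - 1) * α) :
    ∃ a b d : ℕ, d + a + 1 ≤ e ∧ d + η ≤ b ∧ m * b < n * a + (n + 1) * d ∧
      (a ≠ 0 → a ≤ α ∧ β ≤ b) := by
  obtain ⟨a, ha, hle_a⟩ : ∃ a : ℕ, α < a + 1 ∧ (a = 0 ∨ a ≤ α) :=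
    ⟨⌊α⌋₊, Nat.lt_floor_add_one α, or_iff_not_imp_left.2 fun h ↦ (Nat.le_floor_iff' h).1 le_rfl⟩
  have hae : a + 1 ≤ e ∧ a ≤ α + β := by
    rcases hle_a with rfl | h
    · simpa using ⟨he, hαβ⟩
    · constructor <;> linarith
  obtain ⟨d, hd, hd'⟩ : ∃ d : ℕ, d ≤ e - (a + 1) ∧ e - (a + 1) < d + 1 :=
    ⟨_, Nat.floor_le (sub_nonneg.2 hae.1), Nat.lt_floor_add_one _⟩
  obtain ⟨b, hb, hb'⟩ : ∃ b : ℕ, α + β - a ≤ b ∧ b < α + β - a + 1 :=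
    ⟨_, Nat.le_ceil _, Nat.ceil_lt_add_one (sub_nonneg.2 hae.2)⟩
  refine ⟨a, b, d, by linarith, by linarith, ?_, fun h ↦ ?_⟩
  · have hm' : (1 : ℝ) ≤ m := by exact_mod_cast hm
    have : (m * b : ℝ) < n * a + (n + 1) * d := calc
      (m * b : ℝ) ≤ m * (α + β - a + 1) := by gcongr
      _ < n * a + (n + 1) * (e - (a + 1) - 1) := by
        linarith [mul_nonneg (sub_nonneg.2 hm') (sub_nonneg.2 ha.le)]
      _ ≤ n * a + (n + 1) * d := by gcongr; linarith
    exact_mod_cast this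
  · have := hle_a.resolve_left h
    exact ⟨this, by linarith⟩

theorem exists_degree_bounds (hm : 0 < m) (hn : 0 < n) {Λ I : ℝ} (hΛ : 2 * (m + n + 1) ≤ Λ)
    (hI : 0 ≤ I) : ∃ a b d : ℕ,
      d + a + 1 ≤ Λ * (m * I + m * (m + n) ^ 2 - n * tau m n) ∧
      d + Λ * (n * (tau m n + I) - m * (m + n) ^ 2) ≤ b ∧
      m * b < n * a + (n + 1) * d ∧
      (a ≠ 0 → a ≤ Λ * (m * I - n * (m + n) ^ 2) ∧ Λ * (n * I + n * (m + n) ^ 2 + m) ≤ b) := by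
  have hΛ1 : 1 ≤ Λ := by linarith [m.cast_nonneg (α := ℝ), n.cast_nonneg (α := ℝ)]
  have hΛ0 : 0 ≤ Λ := zero_le_one.trans hΛ1
  have hτ : 0 ≤ n * tau m n := mul_nonneg n.cast_nonneg tau_nonneg
  have hsq := mul_le_mul_of_nonneg_left (mul_tau_add_one_le hm hn) hΛ0
  have hcube := mul_le_mul_of_nonneg_left (sq_add_mul_tau_add_one_le hm hn) hΛ0
  apply exists_degree_bounds_of_count hm
  · have : 0 ≤ Λ * (m * I) := by positivity
    linarith
  · have : 0 ≤ Λ * (m ^ 2 + n * (n * tau m n)) := by positivity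
    linarith
  · positivity
  · calc (0 : ℝ) ≤ Λ * ((m + n) * I + m) := by positivity
      _ = _ := by ring
  · have : 0 ≤ Λ * m := by positivity
    linarith
  · linarith

end Exponents

theorem exists_transposed_solution_of_linearIndependent {m n : ℕ} (hm : 0 < m) (hn : 0 < n)
    {Λ I : ℝ} (hΛ : 2 * (m + n + 1) ≤ Λ) (hI : 0 ≤ I) {C : Mat 𝔽 m n}
    {v : Fin (n + 1) → (Fin m ⊕ Fin n → L 𝔽)} (hind : LinearIndependent (L 𝔽) v)
    (hpoly : ∀ r t, v r t ∈ polys 𝔽)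
    (hq : ∀ r l, v r (Sum.inl l) ∈ normLT 𝔽 (Λ * (n * (tau m n + I) - m * (m + n) ^ 2)))
    {A : Fin (n + 1) → Mat 𝔽 m n} (hA : ∀ r l j, (A r - C) l j ∈ normLT 𝔽 (Λ * (-(m + n) * I)))
    (hform : ∀ r j, ((v r ∘ Sum.inl) ᵥ* A r + v r ∘ Sum.inr) j ∈
      normLT 𝔽 (Λ * (-m * (tau m n + I) - n - m * (m + n) ^ 2))) :
    ∃ p : Fin n ⊕ Fin m → L 𝔽, (∀ t, p t ∈ polys 𝔽) ∧ p ∘ Sum.inl ≠ 0 ∧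
      (∀ j, p (Sum.inl j) ∈ normLT 𝔽 (Λ * (m * I - n * (m + n) ^ 2))) ∧
      ∀ l, (C *ᵥ (p ∘ Sum.inl) + p ∘ Sum.inr) l ∈
        normLT 𝔽 (Λ * (-n * I - m - n * (m + n) ^ 2)) := by
  have hform' : ∀ r j, ((v r ∘ Sum.inl) ᵥ* C + v r ∘ Sum.inr) j ∈
      normLT 𝔽 (-(Λ * (m * I + m * (m + n) ^ 2 - n * tau m n))) := by
    intro r j
    have hle : 0 ≤ Λ * ((m + n) * tau m n + n) :=
      mul_nonneg (le_trans (by positivity) hΛ) (by rw [add_mul_tau hm]; positivity)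
    have hexp : -(Λ * (m * I + m * (m + n) ^ 2 - n * tau m n)) =
        Λ * (n * (tau m n + I) - m * (m + n) ^ 2) + Λ * (-(m + n) * I) := by ring
    rw [hexp]
    exact vecMul_add_mem_normLT_of_sub (hq r) (hA r) (normLT_mono (by linarith) (hform r j))
  obtain ⟨a, b, d, hda, hdb, hcard, hab⟩ := exists_degree_bounds hm hn hΛ hI
  obtain ⟨p₁, p₂, hp₁, hp₂, hne, hlt₁, hlt₂⟩ := exists_transposed_solution
    (q₁ := (Matrix.of v).toCols₁) (q₂ := (Matrix.of v).toCols₂) (fun r l ↦ hpoly r _)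
    (fun r j ↦ hpoly r _) ((Matrix.fromCols_toCols (Matrix.of v)).symm ▸ hind) hq hform' hdb hda
    (by simpa using hcard)
  have ha : a ≠ 0 := by
    rintro rfl
    exact hne (funext fun j ↦ eq_zero_of_mem_polys_of_mem_normLT_zero (hp₁ j)
      (by simpa using hlt₁ j))
  obtain ⟨haα, hβb⟩ := hab ha
  exact ⟨Sum.elim p₁ p₂, Sum.forall.2 ⟨hp₁, hp₂⟩, hne, fun j ↦ normLT_mono haα (hlt₁ j),
    fun l ↦ normLT_mono (by linarith) (hlt₂ l)⟩

theorem subspace_two_general {m n : ℕ} (hm : 0 < m) (hn : 0 < n) {R : ℝ}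
    (hR : (Fintype.card 𝔽 : ℝ) ^ (2 * (m + n + 1) : ℝ) ≤ R) {i : ℝ} (hi : -1 ≤ i)
    {c₀ : Mat 𝔽 m n} {ρ : ℝ} (hρ : ρ < R ^ (-((m : ℝ) + n) * (1 + i)))
    (hno : ¬ ∃ (q : Fin n ⊕ Fin m → L 𝔽) (A : Mat 𝔽 m n), A ∈ mball c₀ ρ ∧
      (∀ t, IsPoly (q t)) ∧
      0 < (⨆ l' : Fin n, lnorm (q (Sum.inl l'))) ∧
      (⨆ l' : Fin n, lnorm (q (Sum.inl l'))) < delStar R m n * R ^ ((m : ℝ) * (1 + i)) ∧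
      (⨆ l : Fin m, lnorm (Matrix.vecMul q (AbarStar A) (Sum.inl l))) <
        delStar R m n * R ^ (-(n : ℝ) * (1 + i) - m))
    (v : Fin (n + 1) → (Fin m ⊕ Fin n → L 𝔽))
    (hv : ∀ r, (∀ t, IsPoly (v r t)) ∧ ∃ A ∈ mball c₀ ρ,
      (⨆ l : Fin m, lnorm (v r (Sum.inl l))) <
        del R m n * R ^ ((n : ℝ) * (tau m n + i + 1)) ∧
      (⨆ l' : Fin n, lnorm (Matrix.vecMul (v r) (Abar A) (Sum.inl l'))) <
        del R m n * R ^ (-(m : ℝ) * (tau m n + i + 1) - n)) :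
    ¬ LinearIndependent (L 𝔽) v := by
  intro hind
  have hk := one_lt_card_field (𝔽 := 𝔽)
  have hk₀ := zero_lt_one.trans hk
  have : Nonempty (Fin m) := Fin.pos_iff_nonempty.1 hm
  have : Nonempty (Fin n) := Fin.pos_iff_nonempty.1 hn
  obtain ⟨Λ, rfl⟩ : ∃ Λ : ℝ, (Fintype.card 𝔽 : ℝ) ^ Λ = R :=
    ⟨_, Real.rpow_logb hk₀ hk.ne' ((Real.rpow_pos_of_pos hk₀ _).trans_le hR)⟩
  have hΛ := (Real.rpow_le_rpow_left_iff hk).1 hR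
  rw [add_assoc _ i, add_comm i] at hv
  simp only [del_rpow_mul_rpow hk₀, delStar_rpow_mul_rpow hk₀, iSup_lnorm_lt_rpow_iff,
    vecMul_Abar_inl, vecMul_AbarStar_inl] at hno hv
  rw [← Real.rpow_mul hk₀.le] at hρ
  choose hpoly A hA hq hform using hv
  obtain ⟨p, hp, hne, hp₁, hp₂⟩ := exists_transposed_solution_of_linearIndependent hm hn hΛ
    (neg_le_iff_add_nonneg'.1 hi) hind hpoly hq
    (fun r ↦ sub_apply_mem_normLT_of_mem_mball hρ (hA r)) hform
  exact hno ⟨p, c₀, self_mem_mball (hA 0), hp, iSup_lnorm_pos hne, hp₁, hp₂⟩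

end Transference

/-- **Theorem (Statement 6).** (Lemma `subspace2`.)  If on a small ball `B` the system
(16)–(17) at level `i` has no polynomial solutions, then the set of `q ∈ 𝔽[X]^{m+n}`
solving (14)–(15) at level `i + 1` for some `A ∈ B` contains at most `n` linearly
independent points. -/
theorem subspace_two (𝔽 : Type) [Field 𝔽] [Fintype 𝔽] (m n : ℕ)
    (hm : 0 < m) (hn : 0 < n) (σ : ℝ) (hσ : 0 < σ) :
    ∃ R₀ : ℝ, 1 ≤ R₀ ∧ ∀ R : ℝ, R₀ ≤ R →
      ∀ (i : ℕ) (c₀ : Mat 𝔽 m n) (ρ : ℝ),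
        ρ < R ^ (-((m : ℝ) + n) * (1 + i)) →
        (∀ A ∈ mball c₀ ρ, mnorm A ≤ σ) →
        (¬ ∃ (q : Fin n ⊕ Fin m → L 𝔽) (A : Mat 𝔽 m n), A ∈ mball c₀ ρ ∧
          (∀ t, IsPoly (q t)) ∧
          0 < (⨆ l' : Fin n, lnorm (q (Sum.inl l'))) ∧
          (⨆ l' : Fin n, lnorm (q (Sum.inl l'))) <
            delStar R m n * R ^ ((m : ℝ) * (1 + i)) ∧
          (⨆ l : Fin m, lnorm (Matrix.vecMul q (AbarStar A) (Sum.inl l))) <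
            delStar R m n * R ^ (-(n : ℝ) * (1 + i) - m)) →
        ∀ v : Fin (n + 1) → (Fin m ⊕ Fin n → L 𝔽),
          (∀ r, (∀ t, IsPoly (v r t)) ∧ ∃ A ∈ mball c₀ ρ,
            0 < (⨆ l : Fin m, lnorm (v r (Sum.inl l))) ∧
            (⨆ l : Fin m, lnorm (v r (Sum.inl l))) <
              del R m n * R ^ ((n : ℝ) * (tau m n + i + 1)) ∧
            (⨆ l' : Fin n, lnorm (Matrix.vecMul (v r) (Abar A) (Sum.inl l'))) <
              del R m n * R ^ (-(m : ℝ) * (tau m n + i + 1) - n)) →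
          ¬ LinearIndependent (L 𝔽) v :=
  ⟨(Fintype.card 𝔽 : ℝ) ^ (2 * (m + n + 1) : ℝ),
    Real.one_le_rpow one_lt_card_field.le (by positivity),
    fun _ hR i _ _ hρ _ hno v hv ↦ subspace_two_general hm hn hR
      (neg_one_lt_zero.le.trans i.cast_nonneg) hρ hno v fun r ↦
        ⟨(hv r).1, (hv r).2.imp fun _ h ↦ ⟨h.1, h.2.2⟩⟩⟩

end FSBad
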